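/- Consider the one-parameter family of coefficient vectors (1,b,0,0). Over the field ℚ(t) of rational functions in one variable t, the matrix of consequences M(1,t,0,0) has rank exactly 32; moreover, over ℚ, the matrices M(1,0,0,0) and M(1,−1,0,0) each have rank exactly 27. -/

import Mathlib

/-- First components `p_i` (1-indexed columns) of the 42 quadruples. -/
def colP : Fin 42 → ℕ :=
  ![4,8,11,13,14,1,4,8,11,13,14,1,4,8,11,13,14,1,5,9,12,15,16,2,17,24,26,27,28,7,19,29,34,36,37,10,2,7,10,3,23,33]

/-- Second components `q_i`. -/
def colQ : Fin 42 → ℕ :=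
  ![5,9,12,15,16,2,6,18,20,21,22,4,6,18,20,21,22,4,6,18,20,21,22,4,18,25,30,31,32,8,20,30,35,38,39,11,3,17,19,5,24,34]

/-- Third components `r_i`. -/
def colR : Fin 42 → ℕ :=
  ![21,31,38,40,41,13,17,24,26,27,28,7,18,25,30,31,32,8,18,25,30,31,32,8,20,30,35,38,39,11,21,31,38,40,41,13,15,23,29,9,26,36]

/-- Fourth components `s_i`. -/
def colS : Fin 42 → ℕ :=
  ![22,32,39,41,42,14,22,32,39,41,42,14,19,29,34,36,37,10,20,30,35,38,39,11,21,31,38,40,41,13,22,32,39,41,42,14,16,28,33,12,27,37]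

/-- The 42×42 matrix of consequences `M(a,b,c,d)` over a field `K`:
row `i` has entry `a` in column `p_i`, `b` in column `q_i`, `c` in column `r_i`,
`d` in column `s_i` (columns counted 1-based), and `0` elsewhere. -/
def consMatrix (K : Type*) [Field K] (a b c d : K) : Matrix (Fin 42) (Fin 42) K :=
  fun i j =>
    (if (j : ℕ) + 1 = colP i then a else 0) +
    (if (j : ℕ) + 1 = colQ i then b else 0) +
    (if (j : ℕ) + 1 = colR i then c else 0) +
    (if (j : ℕ) + 1 = colS i then d else 0)

/-!
Read the rows of `M(1, -s, 0, 0)` as the arcs `p_i → q_i` of a directed graph on the 42 columns: a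
vector `v` is in the kernel iff `v (p_i) = s * v (q_i)` for every arc. Each connected component has
exactly one vertex without outgoing arcs, and following arcs from `j` to this root forces
`v j = s ^ depth j * v (root j)`. A kernel vector is thus given by its values at the roots, and the
arcs constrain them only through `s ^ depth (p_i) = s ^ (depth (q_i) + 1)`, which makes the value at
the root vanish if it fails. There are 15 components. If `s` is `0` or `1`, all of them satisfy the
constraint, so the rank is `42 - 15`. Five of them contain an arc between two vertices of depth `1`,
where the constraint reads `s = s ^ 2`; in the other ten the depth drops by exactly one along each
arc. So the rank is `42 - 10` for all other `s`.
-/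

section ArcMatrix

variable {m n R K : Type*}

/-- The weighted incidence matrix of the directed graph with arcs `src i → tgt i`: row `i` is
`e_(src i) - s • e_(tgt i)`. Its kernel consists of the vectors which get multiplied by `s` when an
arc is traversed backwards. -/
def arcMatrix [Ring R] [DecidableEq n] (src tgt : m → n) (s : R) : Matrix m n R :=
  .of fun i => Pi.single (src i) 1 - Pi.single (tgt i) s

lemma arcMatrix_mulVec [Ring R] [Fintype n] [DecidableEq n] (src tgt : m → n) (s : R) (v : n → R)
    (i : m) : (arcMatrix src tgt s).mulVec v i = v (src i) - s * v (tgt i) := by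
  change (Pi.single (src i) 1 - Pi.single (tgt i) s) ⬝ᵥ v = _
  rw [sub_dotProduct, single_dotProduct, single_dotProduct, one_mul]

lemma mem_ker_arcMatrix_iff [CommRing R] [Fintype n] [DecidableEq n] {src tgt : m → n} {s : R}
    {v : n → R} :
    v ∈ LinearMap.ker (arcMatrix src tgt s).mulVecLin ↔ ∀ i, v (src i) = s * v (tgt i) := by
  simp only [LinearMap.mem_ker, Matrix.mulVecLin_apply, funext_iff, arcMatrix_mulVec,
    Pi.zero_apply, sub_eq_zero]

/-- A spanning forest of the directed graph with arcs `src i → tgt i`, having one tree in each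
connected component, directed towards its root. Only the root of the component and the distance
to it in the tree are recorded; the tree arcs are those of `exists_arc`. -/
structure SpanningForest (src tgt : m → n) where
  root : n → n
  depth : n → ℕ
  root_src : ∀ i, root (src i) = root (tgt i)
  depth_root : ∀ j, depth (root j) = 0
  root_of_depth_eq_zero : ∀ j, depth j = 0 → root j = j
  exists_arc : ∀ j, depth j ≠ 0 → ∃ i, src i = j ∧ depth j = depth (tgt i) + 1

namespace SpanningForest

variable {src tgt : m → n} (F : SpanningForest src tgt)

/-- The roots `k` for which the potential `s ^ depth` solves the equations of the kernel of
`arcMatrix src tgt s` on the whole component of `k`. -/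
def balancedRoots [Monoid R] (s : R) : Set n :=
  {k | F.depth k = 0 ∧ ∀ i, F.root (src i) = k → s ^ F.depth (src i) = s ^ (F.depth (tgt i) + 1)}

/-- The roots of the components in which every arc decreases the depth by exactly one. -/
def gradedRoots : Set n :=
  {k | F.depth k = 0 ∧ ∀ i, F.root (src i) = k → F.depth (src i) = F.depth (tgt i) + 1}

instance [Fintype m] [DecidableEq n] : DecidablePred (· ∈ F.gradedRoots) :=
  fun _ => inferInstanceAs (Decidable (_ ∧ ∀ _, _ → _))

lemma apply_eq_pow_depth_mul_root [Monoid R] {s : R} {v : n → R}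
    (hv : ∀ i, v (src i) = s * v (tgt i)) (j : n) :
    v j = s ^ F.depth j * v (F.root j) := by
  induction hd : F.depth j generalizing j with
  | zero => rw [F.root_of_depth_eq_zero j hd, pow_zero, one_mul]
  | succ d ih =>
    obtain ⟨i, rfl, hi⟩ := F.exists_arc j (by omega)
    rw [hv, ih (tgt i) (by omega), F.root_src, pow_succ', mul_assoc]

lemma apply_root_eq_zero_of_notMem_balancedRoots [MonoidWithZero R] [IsRightCancelMulZero R]
    {s : R} {v : n → R}
    (hv : ∀ i, v (src i) = s * v (tgt i)) {j : n} (hj : F.root j ∉ F.balancedRoots s) :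
    v (F.root j) = 0 := by
  simp only [balancedRoots, Set.mem_ofPred_eq, F.depth_root, true_and, not_forall] at hj
  obtain ⟨i, hi, hne⟩ := hj
  have two_paths : s ^ F.depth (src i) * v (F.root j) =
      s ^ (F.depth (tgt i) + 1) * v (F.root j) := by
    rw [← hi, ← F.apply_eq_pow_depth_mul_root hv, hv, F.apply_eq_pow_depth_mul_root hv (tgt i),
      F.root_src, pow_succ', mul_assoc]
  exact (mul_eq_mul_right_iff.mp two_paths).resolve_left hne

lemma eq_zero_of_forall_mem_balancedRoots [MonoidWithZero R] [IsRightCancelMulZero R] {s : R}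
    {v : n → R} (hv : ∀ i, v (src i) = s * v (tgt i))
    (h0 : ∀ k ∈ F.balancedRoots s, v k = 0) : v = 0 := by
  funext j
  have root_eq_zero : v (F.root j) = 0 := by
    by_cases hj : F.root j ∈ F.balancedRoots s
    · exact h0 _ hj
    · exact F.apply_root_eq_zero_of_notMem_balancedRoots hv hj
  rw [F.apply_eq_pow_depth_mul_root hv, root_eq_zero, mul_zero, Pi.zero_apply]

open Classical in
lemma exists_extension_of_balancedRoots [MonoidWithZero R] {s : R} (w : F.balancedRoots s → R) :
    ∃ v : n → R, (∀ i, v (src i) = s * v (tgt i)) ∧ ∀ k : F.balancedRoots s, v k = w k := by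
  refine ⟨fun j => if h : F.root j ∈ F.balancedRoots s then s ^ F.depth j * w ⟨_, h⟩ else 0,
    fun i => ?_, fun k => ?_⟩
  · simp only [← F.root_src i]
    split_ifs with h
    · rw [h.2 i rfl, pow_succ', mul_assoc]
    · rw [mul_zero]
  · simp [F.root_of_depth_eq_zero k k.2.1, k.2.1]

section Field

variable [Field K] [Fintype n] [DecidableEq n] (s : K)

lemma finrank_ker_arcMatrix :
    Module.finrank K (LinearMap.ker (arcMatrix src tgt s).mulVecLin) =
      (F.balancedRoots s).ncard := by
  let restrict := (LinearMap.funLeft K K ((↑) : F.balancedRoots s → n)).domRestrict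
    (LinearMap.ker (arcMatrix src tgt s).mulVecLin)
  have restrict_injective : Function.Injective restrict := by
    refine (injective_iff_map_eq_zero restrict).mpr fun v hv => Subtype.ext ?_
    exact F.eq_zero_of_forall_mem_balancedRoots (mem_ker_arcMatrix_iff.mp v.2)
      fun k hk => congrFun hv ⟨k, hk⟩
  have restrict_surjective : Function.Surjective restrict := fun w => by
    obtain ⟨v, hv, hvw⟩ := F.exists_extension_of_balancedRoots w
    exact ⟨⟨v, mem_ker_arcMatrix_iff.mpr hv⟩, funext hvw⟩
  rw [(LinearEquiv.ofBijective restrict ⟨restrict_injective, restrict_surjective⟩).finrank_eq,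
    Module.finrank_eq_nat_card_basis (Pi.basisFun K _), Nat.card_coe_set_eq]

theorem rank_arcMatrix_add_ncard_balancedRoots :
    (arcMatrix src tgt s).rank + (F.balancedRoots s).ncard = Fintype.card n := by
  rw [← F.finrank_ker_arcMatrix s, Matrix.rank, LinearMap.finrank_range_add_finrank_ker,
    Module.finrank_pi]

end Field

lemma balancedRoots_of_isIdempotentElem [Monoid R] {s : R} (hs : IsIdempotentElem s)
    (hsrc : ∀ i, F.depth (src i) ≠ 0) : F.balancedRoots s = {k | F.depth k = 0} := by
  ext k
  simp [balancedRoots, hs.pow_eq (hsrc _), hs.pow_succ_eq]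

lemma balancedRoots_eq_gradedRoots [Monoid R] {s : R} (hs : ¬IsIdempotentElem s)
    (hF : ∀ k, F.depth k = 0 → k ∉ F.gradedRoots →
      ∃ i, F.root (src i) = k ∧ F.depth (src i) = 1 ∧ F.depth (tgt i) = 1) :
    F.balancedRoots s = F.gradedRoots := by
  ext k
  refine ⟨fun ⟨hk, hbal⟩ => ?_, fun ⟨hk, hgraded⟩ => ⟨hk, fun i hi => by rw [hgraded i hi]⟩⟩
  by_contra hgraded
  obtain ⟨i, hi, hsrc, htgt⟩ := hF k hk hgraded
  have pow_eq : s ^ 1 = s ^ 2 := by simpa only [hsrc, htgt] using hbal i hi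
  exact hs (by rw [IsIdempotentElem, ← sq, ← pow_eq, pow_one])

end SpanningForest

end ArcMatrix

/-- The column `p_i`, counted from 0. -/
def consSrc (i : Fin 42) : Fin 42 := Fin.ofNat 42 (colP i - 1)

/-- The column `q_i`, counted from 0. -/
def consTgt (i : Fin 42) : Fin 42 := Fin.ofNat 42 (colQ i - 1)

lemma colP_eq : ∀ i, colP i = consSrc i + 1 := by decide

lemma colQ_eq : ∀ i, colQ i = consTgt i + 1 := by decide

lemma consMatrix_one_eq_arcMatrix {K : Type*} [Field K] (b : K) :
    consMatrix K 1 b 0 0 = arcMatrix consSrc consTgt (-b) := by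
  ext i j
  by_cases h : j = consTgt i <;>
    simp [consMatrix, arcMatrix, Pi.single_apply, colP_eq, colQ_eq, ← Fin.ext_iff, h]

/-- The forest of shortest paths from the columns to the roots, which are the columns that are not
among the `p_i`. -/
def consForest : SpanningForest consSrc consTgt where
  root := ![5, 5, 5, 5, 5, 5, 17, 17, 17, 19, 19, 19, 20, 21, 20, 21, 17, 17, 19, 19, 20, 21,
    24, 24, 24, 29, 30, 31, 29, 29, 30, 31, 34, 34, 34, 37, 38, 37, 38, 39, 40, 41]
  depth := ![2, 2, 2, 1, 1, 0, 2, 1, 1, 2, 1, 1, 1, 1, 1, 1, 1, 0, 1, 0, 0, 0,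
    2, 1, 0, 1, 1, 1, 1, 0, 0, 0, 2, 1, 0, 1, 1, 0, 0, 0, 0, 0]
  root_src := by decide
  depth_root := by decide
  root_of_depth_eq_zero := by decide
  exists_arc := by decide

lemma depth_consSrc_ne_zero : ∀ i, consForest.depth (consSrc i) ≠ 0 := by decide

lemma ncard_roots_consForest : {k | consForest.depth k = 0}.ncard = 15 := by
  rw [Set.ncard_eq_toFinset_card']
  decide

lemma ncard_gradedRoots_consForest : consForest.gradedRoots.ncard = 10 := by
  rw [Set.ncard_eq_toFinset_card']
  decide

lemma exists_arc_depth_one_of_notMem_gradedRoots :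
    ∀ k, consForest.depth k = 0 → k ∉ consForest.gradedRoots →
      ∃ i, consForest.root (consSrc i) = k ∧ consForest.depth (consSrc i) = 1 ∧
        consForest.depth (consTgt i) = 1 := by
  decide

lemma rank_consMatrix_add_ncard {K : Type*} [Field K] (b : K) :
    (consMatrix K 1 b 0 0).rank + (consForest.balancedRoots (-b)).ncard = 42 := by
  rw [consMatrix_one_eq_arcMatrix, consForest.rank_arcMatrix_add_ncard_balancedRoots,
    Fintype.card_fin]

lemma isIdempotentElem_neg_iff {K : Type*} [Field K] {b : K} :
    IsIdempotentElem (-b) ↔ b = 0 ∨ b = -1 := by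
  rw [IsIdempotentElem.iff_eq_zero_or_one, neg_eq_zero, neg_eq_iff_eq_neg]

lemma ratFunc_X_ne_neg_one {K : Type*} [Field K] : (RatFunc.X : RatFunc K) ≠ -1 :=
  fun h => RatFunc.transcendental_X (h ▸ isAlgebraic_one.neg)

theorem stmt_4_general {K : Type*} [Field K] (b : K) :
    (b = 0 ∨ b = -1 → (consMatrix K 1 b 0 0).rank = 27) ∧
    (b ≠ 0 → b ≠ -1 → (consMatrix K 1 b 0 0).rank = 32) := by
  have rank_add := rank_consMatrix_add_ncard b
  constructor
  · intro hb
    rw [consForest.balancedRoots_of_isIdempotentElem (isIdempotentElem_neg_iff.mpr hb)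
      depth_consSrc_ne_zero, ncard_roots_consForest] at rank_add
    omega
  · intro h0 h1
    have not_idem : ¬IsIdempotentElem (-b) := isIdempotentElem_neg_iff.not.mpr (by tauto)
    rw [consForest.balancedRoots_eq_gradedRoots not_idem
      exists_arc_depth_one_of_notMem_gradedRoots, ncard_gradedRoots_consForest] at rank_add
    omega

/-- For the one-parameter family `(1,b,0,0)`: over the rational function field `ℚ(t)`
the matrix of consequences `M(1,t,0,0)` has rank exactly 32, and over `ℚ` the matrices
`M(1,0,0,0)` and `M(1,-1,0,0)` each have rank exactly 27. -/
theorem stmt_4 :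
    (consMatrix (RatFunc ℚ) 1 RatFunc.X 0 0).rank = 32 ∧
    (consMatrix ℚ 1 0 0 0).rank = 27 ∧
    (consMatrix ℚ 1 (-1) 0 0).rank = 27 := by
  exact ⟨(stmt_4_general _).2 RatFunc.X_ne_zero ratFunc_X_ne_neg_one,
    (stmt_4_general 0).1 (.inl rfl), (stmt_4_general (-1)).1 (.inr rfl)⟩
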